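/- arXiv:1902.00768 — 2 statements merged into one kernel-verified Lean document; each statement's English description precedes it below -/
import Mathlib

section
/- For all integers T, p ≥ 1 there exists a finite set 𝒵 ⊂ ℝ^{Tp} with cardinality |𝒵| ≤ 16π·(Tp)^{3/2} such that ‖z‖_∞ ≤ 1 for every z ∈ 𝒵, and such that for every v̄ ∈ ℝ^{Tp} and every n ≥ 1, ‖Toep_{T,n}(v̄)‖_op ≤ 4·max_{z∈𝒵} ⟨z, v̄⟩. -/
/-- ℓ₂→ℓ₂ operator norm of a real matrix. -/
noncomputable def opNorm {α β : Type*} [Fintype α] [Fintype β] [DecidableEq β]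
    (A : Matrix α β ℝ) : ℝ :=
  ‖LinearMap.toContinuousLinearMap (Matrix.toEuclideanLin A)‖

/-- The banded block-Toeplitz matrix `Toep_{T,n}(v̄)` whose `(i,j)`-th `1×p` block is
`v_{T−(j−i)}ᵀ` when `0 ≤ j−i ≤ T−1` and zero otherwise. -/
noncomputable def Toep (T p n : ℕ) (v : Fin T → Fin p → ℝ) :
    Matrix (Fin n) (Fin (n + T - 1) × Fin p) ℝ :=
  Matrix.of fun i jk =>
    if h : (i : ℕ) ≤ (jk.1 : ℕ) ∧ (jk.1 : ℕ) - (i : ℕ) < T ∧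
        T - 1 - ((jk.1 : ℕ) - (i : ℕ)) < T
    then v ⟨T - 1 - ((jk.1 : ℕ) - (i : ℕ)), h.2.2⟩ jk.2
    else 0

/-!
Rows of the Toeplitz matrix correlate the reversed blocks of `v` with the input. `T` consecutive
rows only see a window of `2T` input blocks, where the correlation agrees with a cyclic one on
`ℤ/2T`, so Plancherel bounds it by the symbol of `v` at the `2T` characters of `ℤ/2T`; every input
block lies in two windows, which costs a factor `√2`. A second use of Plancherel, on `ℤ/p`, replaces
the Euclidean norm of the symbol by its largest Fourier coefficient, and taking real parts after
multiplication by the fourth roots of unity costs another `√2`. The real parts of the `4 · 2T · p`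
products of characters and fourth roots of unity are therefore test vectors with constant `2`.
-/

open Finset Matrix
open scoped ComplexConjugate

section Correlation

/-- The cross-correlation `a ↦ ∑ d, ⟨w d, y (a + e d)⟩` of a vector-valued signal `y` with the
filter that has the tap `w d` at position `e d`. The positions may be given in a cyclic group or
in `ℕ`. -/
def correlation {D A ι R : Type*} [Fintype D] [Fintype ι] [Add A] [CommSemiring R]
    (e : D → A) (w : D → ι → R) (y : A → ι → R) (a : A) : R :=
  ∑ d, ∑ k, w d k * y (a + e d) k

/-- The Fourier transform at the character `ψ` of the vector-valued filter that has the tap `w d`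
at position `e d`. -/
noncomputable def filterSymbol {D G ι : Type*} [Fintype D] [AddCommGroup G]
    (e : D → G) (w : D → ι → ℂ) (ψ : AddChar G ℂ) (k : ι) : ℂ :=
  ∑ d, ψ (e d) * w d k

theorem norm_sq_sum_mul_le {ι R : Type*} [SeminormedRing R] (s : Finset ι) (f g : ι → R) :
    ‖∑ k ∈ s, f k * g k‖ ^ 2 ≤ (∑ k ∈ s, ‖f k‖ ^ 2) * ∑ k ∈ s, ‖g k‖ ^ 2 := by
  calc ‖∑ k ∈ s, f k * g k‖ ^ 2 ≤ (∑ k ∈ s, ‖f k‖ * ‖g k‖) ^ 2 := by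
        gcongr
        exact norm_sum_le_of_le s fun k _ ↦ norm_mul_le _ _
    _ ≤ (∑ k ∈ s, ‖f k‖ ^ 2) * ∑ k ∈ s, ‖g k‖ ^ 2 := sum_mul_sq_le_sq_mul_sq _ _ _

variable {D G ι : Type*} [Fintype D] [AddCommGroup G] [Fintype G] [Fintype ι]

theorem sum_addChar_norm_sq_sum_mul (f : G → ℂ) :
    ∑ ψ : AddChar G ℂ, ‖∑ x, ψ x * f x‖ ^ 2 = Fintype.card G * ∑ x, ‖f x‖ ^ 2 := by
  classical
  have expand (ψ : AddChar G ℂ) :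
      (‖∑ x, ψ x * f x‖ : ℂ) ^ 2 = ∑ x, ∑ y, f x * conj (f y) * ψ (x - y) := by
    rw [← Complex.mul_conj', map_sum, sum_mul_sum]
    refine sum_congr rfl fun x _ ↦ sum_congr rfl fun y _ ↦ ?_
    rw [map_mul, ← AddChar.map_neg_eq_conj, sub_eq_add_neg, AddChar.map_add_eq_mul]
    ring
  have orthogonality (x : G) :
      ∑ ψ : AddChar G ℂ, ∑ y, f x * conj (f y) * ψ (x - y) = Fintype.card G * ‖f x‖ ^ 2 := by
    rw [sum_comm]
    simp_rw [← mul_sum, AddChar.sum_apply_eq_ite, sub_eq_zero, mul_ite, mul_zero]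
    rw [Fintype.sum_ite_eq, Complex.mul_conj', mul_comm]
  apply Complex.ofReal_injective
  push_cast
  simp_rw [expand]
  rw [sum_comm, mul_sum]
  exact sum_congr rfl fun x _ ↦ orthogonality x

theorem sum_addChar_mul_correlation (e : D → G) (w : D → ι → ℂ) (y : G → ι → ℂ)
    (ψ : AddChar G ℂ) :
    ∑ x, ψ x * correlation e w y x = ∑ k, filterSymbol e w ψ⁻¹ k * ∑ x, ψ x * y x k := by
  have shift (d : D) (k : ι) :
      ∑ x, ψ x * (w d k * y (x + e d) k) = ψ⁻¹ (e d) * w d k * ∑ x, ψ x * y x k := by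
    rw [mul_sum, ← Equiv.sum_comp (Equiv.addRight (e d)) fun x ↦ _ * (ψ x * y x k)]
    refine sum_congr rfl fun x _ ↦ ?_
    have cancel : ψ⁻¹ (e d) * ψ (e d) = 1 := by
      rw [AddChar.inv_apply, ← AddChar.map_add_eq_mul, neg_add_cancel, AddChar.map_zero_eq_one]
    rw [Equiv.coe_addRight, AddChar.map_add_eq_mul]
    linear_combination (-(ψ x * w d k * y (x + e d) k)) * cancel
  simp_rw [correlation, filterSymbol, sum_mul, ← shift, mul_sum]
  rw [sum_comm, sum_comm (s := (univ : Finset ι))]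
  exact sum_congr rfl fun d _ ↦ sum_comm

theorem sum_norm_sq_correlation_le {e : D → G} {w : D → ι → ℂ} {B : ℝ}
    (hB : ∀ ψ, ∑ k, ‖filterSymbol e w ψ k‖ ^ 2 ≤ B) (y : G → ι → ℂ) :
    ∑ x, ‖correlation e w y x‖ ^ 2 ≤ B * ∑ x, ∑ k, ‖y x k‖ ^ 2 := by
  have pointwise (ψ : AddChar G ℂ) :
      ‖∑ x, ψ x * correlation e w y x‖ ^ 2 ≤ B * ∑ k, ‖∑ x, ψ x * y x k‖ ^ 2 := by
    rw [sum_addChar_mul_correlation]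
    exact (norm_sq_sum_mul_le _ _ _).trans (by gcongr; exact hB _)
  have card_pos : (0 : ℝ) < Fintype.card G := by exact_mod_cast Fintype.card_pos
  refine le_of_mul_le_mul_left ?_ card_pos
  calc Fintype.card G * ∑ x, ‖correlation e w y x‖ ^ 2
      = ∑ ψ : AddChar G ℂ, ‖∑ x, ψ x * correlation e w y x‖ ^ 2 :=
        (sum_addChar_norm_sq_sum_mul _).symm
    _ ≤ ∑ ψ : AddChar G ℂ, B * ∑ k, ‖∑ x, ψ x * y x k‖ ^ 2 :=
        sum_le_sum fun ψ _ ↦ pointwise ψ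
    _ = B * ∑ k, Fintype.card G * ∑ x, ‖y x k‖ ^ 2 := by
        rw [← mul_sum, sum_comm]
        simp_rw [sum_addChar_norm_sq_sum_mul]
    _ = Fintype.card G * (B * ∑ x, ∑ k, ‖y x k‖ ^ 2) := by
        rw [← mul_sum, sum_comm, mul_left_comm]

end Correlation

section Windows

theorem sum_range_mul_eq_sum_sum {M : Type*} [AddCommMonoid M] (a : ℕ → M) (m n : ℕ) :
    ∑ i ∈ range (m * n), a i = ∑ q ∈ range m, ∑ s ∈ range n, a (q * n + s) := by
  induction m with
  | zero => simp
  | succ m ih => rw [sum_range_succ, ← ih, Nat.succ_mul, sum_range_add]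

theorem sum_range_comp_add_left_le_of_hasSum {b : ℕ → ℝ} {S : ℝ} (hb : ∀ j, 0 ≤ b j)
    (hS : HasSum b S) (c m : ℕ) : ∑ i ∈ range m, b (c + i) ≤ S := by
  simpa using sum_le_hasSum ((range m).map (addLeftEmbedding c)) (fun j _ ↦ hb j) hS

theorem sum_windows_le_of_hasSum {b : ℕ → ℝ} {S : ℝ} (hb : ∀ j, 0 ≤ b j) (hS : HasSum b S)
    (m T : ℕ) : ∑ q ∈ range m, ∑ j ∈ range (T + T), b (q * T + j) ≤ 2 * S := by
  calc ∑ q ∈ range m, ∑ j ∈ range (T + T), b (q * T + j)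
      = ∑ i ∈ range (m * T), b i + ∑ i ∈ range (m * T), b (T + i) := by
        rw [sum_range_mul_eq_sum_sum, sum_range_mul_eq_sum_sum, ← sum_add_distrib]
        simp_rw [sum_range_add, add_left_comm T]
    _ ≤ S + S := by
        gcongr
        · simpa using sum_range_comp_add_left_le_of_hasSum hb hS 0 (m * T)
        · exact sum_range_comp_add_left_le_of_hasSum hb hS T (m * T)
    _ = 2 * S := (two_mul S).symm

variable {T : ℕ} {ι : Type*} [Fintype ι]

theorem correlation_cyclic_eq_correlation (w : Fin T → ι → ℝ) (Y : ℕ → ι → ℝ) (s : Fin T) :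
    correlation (Fin.castAdd T) (fun d k ↦ (w d k : ℂ)) (fun j k ↦ (Y j k : ℂ)) (Fin.castAdd T s) =
      ((correlation Fin.val w Y s : ℝ) : ℂ) := by
  have no_wrap (d : Fin T) : (Fin.castAdd T s + Fin.castAdd T d).val = s + d := by
    rw [Fin.val_add, Fin.val_castAdd, Fin.val_castAdd, Nat.mod_eq_of_lt (by omega)]
  simp [correlation, no_wrap]

variable [NeZero T] {w : Fin T → ι → ℝ} {B : ℝ}

theorem sum_range_sq_correlation_le_window
    (hB : ∀ ψ, ∑ k, ‖filterSymbol (Fin.castAdd T) (fun d k ↦ (w d k : ℂ)) ψ k‖ ^ 2 ≤ B)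
    (Y : ℕ → ι → ℝ) :
    ∑ s ∈ range T, correlation Fin.val w Y s ^ 2 ≤
      B * ∑ j ∈ range (T + T), ∑ k, Y j k ^ 2 := by
  set c : Fin (T + T) → ℂ :=
    correlation (Fin.castAdd T) (fun d k ↦ (w d k : ℂ)) (fun j k ↦ (Y j k : ℂ)) with hc
  calc ∑ s ∈ range T, correlation Fin.val w Y s ^ 2
      = ∑ s : Fin T, ‖c (Fin.castAdd T s)‖ ^ 2 := by
        simp [sum_range, hc, correlation_cyclic_eq_correlation]
    _ ≤ ∑ x, ‖c x‖ ^ 2 := by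
        rw [Fin.sum_univ_add]
        exact le_add_of_nonneg_right (by positivity)
    _ ≤ B * ∑ j ∈ range (T + T), ∑ k, Y j k ^ 2 := by
        simpa [sum_range] using sum_norm_sq_correlation_le hB fun j k ↦ (Y j k : ℂ)

theorem sum_range_sq_correlation_le_of_hasSum
    (hB : ∀ ψ, ∑ k, ‖filterSymbol (Fin.castAdd T) (fun d k ↦ (w d k : ℂ)) ψ k‖ ^ 2 ≤ B)
    {Y : ℕ → ι → ℝ} {S : ℝ} (hS : HasSum (fun j ↦ ∑ k, Y j k ^ 2) S) (n : ℕ) :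
    ∑ s ∈ range n, correlation Fin.val w Y s ^ 2 ≤ 2 * B * S := by
  have B_nonneg : 0 ≤ B := le_trans (by positivity) (hB 0)
  have window (q : ℕ) : ∑ s ∈ range T, correlation Fin.val w Y (q * T + s) ^ 2 ≤
      B * ∑ j ∈ range (T + T), ∑ k, Y (q * T + j) k ^ 2 := by
    simpa only [correlation, add_assoc] using
      sum_range_sq_correlation_le_window hB fun j ↦ Y (q * T + j)
  calc ∑ s ∈ range n, correlation Fin.val w Y s ^ 2
      ≤ ∑ s ∈ range (n * T), correlation Fin.val w Y s ^ 2 :=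
        sum_le_sum_of_subset_of_nonneg
          (range_mono (Nat.le_mul_of_pos_right n (NeZero.pos T))) fun _ _ _ ↦ sq_nonneg _
    _ = ∑ q ∈ range n, ∑ s ∈ range T, correlation Fin.val w Y (q * T + s) ^ 2 :=
        sum_range_mul_eq_sum_sum _ _ _
    _ ≤ ∑ q ∈ range n, B * ∑ j ∈ range (T + T), ∑ k, Y (q * T + j) k ^ 2 :=
        sum_le_sum fun q _ ↦ window q
    _ ≤ B * (2 * S) := by
        rw [← mul_sum]
        gcongr
        exact sum_windows_le_of_hasSum (fun _ ↦ by positivity) hS n T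
    _ = 2 * B * S := by ring

end Windows

section Toeplitz

variable {T p n : ℕ}

theorem Toep_apply_add (v : Fin T → Fin p → ℝ) (i : Fin n) (d : Fin T) (k : Fin p)
    (h : (i : ℕ) + d < n + T - 1) : Toep T p n v i (⟨i + d, h⟩, k) = v d.rev k := by
  rw [Toep, of_apply, dif_pos (by grind)]
  congr 2
  grind

theorem Toep_mulVec_eq_correlation (v : Fin T → Fin p → ℝ) (x : Fin (n + T - 1) × Fin p → ℝ)
    {Y : ℕ → Fin p → ℝ} (hY : ∀ j : Fin (n + T - 1), Y j = fun k ↦ x (j, k)) (i : Fin n) :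
    (Toep T p n v *ᵥ x) i = correlation Fin.val (v ∘ Fin.rev) Y i := by
  have add_lt (d : Fin T) : (i : ℕ) + d < n + T - 1 := by omega
  rw [mulVec, dotProduct, Fintype.sum_prod_type, correlation]
  refine (Fintype.sum_of_injective (fun d : Fin T ↦ (⟨i + d, add_lt d⟩ : Fin (n + T - 1)))
    (fun d d' h ↦ by grind) _ _ (fun j hj ↦ ?_) fun d ↦ ?_).symm
  · refine sum_eq_zero fun k _ ↦ ?_
    rw [Toep, of_apply, dif_neg, zero_mul]
    rintro ⟨le, sub_lt, -⟩
    exact hj ⟨⟨j - i, sub_lt⟩, Fin.ext (Nat.add_sub_cancel' le)⟩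
  · refine sum_congr rfl fun k _ ↦ ?_
    rw [Toep_apply_add, ← congrFun (hY ⟨i + d, add_lt d⟩) k, Function.comp_apply]

theorem opNorm_Toep_le_sqrt [NeZero T] {v : Fin T → Fin p → ℝ} {B : ℝ}
    (hB : ∀ ψ, ∑ k, ‖filterSymbol (Fin.castAdd T) (fun d k ↦ (v d.rev k : ℂ)) ψ k‖ ^ 2 ≤ B) :
    opNorm (Toep T p n v) ≤ √(2 * B) := by
  refine ContinuousLinearMap.opNorm_le_bound _ (Real.sqrt_nonneg _) fun x ↦ ?_
  set Y : ℕ → Fin p → ℝ :=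
    Function.extend Fin.val (fun (j : Fin (n + T - 1)) k ↦ x (j, k)) 0 with hY
  have Y_val (j : Fin (n + T - 1)) : Y j = fun k ↦ x (j, k) :=
    Fin.val_injective.extend_apply _ _ j
  have norm_sq_x : ‖x‖ ^ 2 = ∑ j : Fin (n + T - 1), ∑ k, Y j k ^ 2 := by
    simp [EuclideanSpace.norm_sq_eq, Fintype.sum_prod_type, Y_val]
  have hasSum_Y : HasSum (fun j ↦ ∑ k, Y j k ^ 2) (‖x‖ ^ 2) := by
    refine ((Fin.val_injective (n := n + T - 1)).hasSum_iff fun j hj ↦ ?_).1 ?_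
    · simp [hY, Function.extend_apply' _ _ _ hj]
    · exact norm_sq_x ▸ hasSum_fintype _
  have norm_sq_mulVec : ‖toEuclideanLin (Toep T p n v) x‖ ^ 2 =
      ∑ s ∈ range n, correlation Fin.val (v ∘ Fin.rev) Y s ^ 2 := by
    simp [EuclideanSpace.norm_sq_eq, sum_range, toLpLin_apply,
      Toep_mulVec_eq_correlation v x.ofLp Y_val]
  rw [LinearMap.coe_toContinuousLinearMap', ← Real.sqrt_sq (norm_nonneg x),
    ← Real.sqrt_mul' _ (sq_nonneg _)]
  refine Real.le_sqrt_of_sq_le (norm_sq_mulVec.trans_le ?_)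
  exact sum_range_sq_correlation_le_of_hasSum hB hasSum_Y n

end Toeplitz

section TestVectors

theorem sum_norm_sq_le_sq_of_forall_addChar {G : Type*} [AddCommGroup G] [Fintype G] {f : G → ℂ}
    {C : ℝ} (hC : ∀ φ : AddChar G ℂ, ‖∑ x, φ x * f x‖ ≤ C) : ∑ x, ‖f x‖ ^ 2 ≤ C ^ 2 := by
  have card_pos : (0 : ℝ) < Fintype.card G := by exact_mod_cast Fintype.card_pos
  refine le_of_mul_le_mul_left ?_ card_pos
  calc Fintype.card G * ∑ x, ‖f x‖ ^ 2 = ∑ φ : AddChar G ℂ, ‖∑ x, φ x * f x‖ ^ 2 :=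
        (sum_addChar_norm_sq_sum_mul f).symm
    _ ≤ ∑ _φ : AddChar G ℂ, C ^ 2 := by gcongr with φ; exact hC φ
    _ = Fintype.card G * C ^ 2 := by simp

theorem norm_le_sqrt_two_mul_of_forall_re_I_pow_mul_le {z : ℂ} {S : ℝ}
    (h : ∀ s : Fin 4, (Complex.I ^ (s : ℕ) * z).re ≤ S) : ‖z‖ ≤ √2 * S := by
  have re_le : z.re ≤ S := by simpa using h 0
  have neg_im_le : -z.im ≤ S := by simpa using h 1
  have neg_re_le : -z.re ≤ S := by simpa using h 2
  have im_le : z.im ≤ S := by simpa using h 3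
  refine (Complex.norm_le_sqrt_two_mul_max z).trans ?_
  gcongr
  exact max_le (abs_le'.2 ⟨re_le, neg_re_le⟩) (abs_le'.2 ⟨im_le, neg_im_le⟩)

variable {T p : ℕ} [NeZero T] [NeZero p]

/-- The test vector attached to a character of `ℤ/2T`, a character of `ℤ/p` and a fourth root of
unity. The cyclic groups are realised on `Fin (T + T)` and `Fin p`, and the block index is
reversed as in `Toep`. -/
noncomputable def testVector (ψ : AddChar (Fin (T + T)) ℂ) (φ : AddChar (Fin p) ℂ) (s : Fin 4) :
    Fin T → Fin p → ℝ :=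
  fun i k ↦ (Complex.I ^ (s : ℕ) * (ψ (Fin.castAdd T i.rev) * φ k)).re

theorem abs_testVector_le_one (ψ : AddChar (Fin (T + T)) ℂ) (φ : AddChar (Fin p) ℂ) (s : Fin 4)
    (i : Fin T) (k : Fin p) : |testVector ψ φ s i k| ≤ 1 := by
  simpa [testVector] using
    Complex.abs_re_le_norm (Complex.I ^ (s : ℕ) * (ψ (Fin.castAdd T i.rev) * φ k))

theorem sum_testVector_mul (ψ : AddChar (Fin (T + T)) ℂ) (φ : AddChar (Fin p) ℂ) (s : Fin 4)
    (v : Fin T → Fin p → ℝ) :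
    ∑ i, ∑ k, testVector ψ φ s i k * v i k =
      (Complex.I ^ (s : ℕ) *
        ∑ k, φ k * filterSymbol (Fin.castAdd T) (fun d k ↦ (v d.rev k : ℂ)) ψ k).re := by
  simp_rw [filterSymbol, mul_sum, Complex.re_sum]
  rw [sum_comm]
  refine sum_congr rfl fun k _ ↦ ?_
  rw [← Equiv.sum_comp Fin.revPerm]
  refine sum_congr rfl fun d _ ↦ ?_
  rw [testVector, Fin.revPerm_apply, Fin.rev_rev, ← Complex.re_mul_ofReal]
  ring_nf

theorem opNorm_Toep_le_two_mul_of_forall_testVector {v : Fin T → Fin p → ℝ} {S : ℝ}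
    (hS : ∀ ψ φ s, ∑ i, ∑ k, testVector ψ φ s i k * v i k ≤ S) (n : ℕ) :
    opNorm (Toep T p n v) ≤ 2 * S := by
  have coeff_le (ψ : AddChar (Fin (T + T)) ℂ) (φ : AddChar (Fin p) ℂ) :
      ‖∑ k, φ k * filterSymbol (Fin.castAdd T) (fun d k ↦ (v d.rev k : ℂ)) ψ k‖ ≤ √2 * S :=
    norm_le_sqrt_two_mul_of_forall_re_I_pow_mul_le fun s ↦
      (sum_testVector_mul ψ φ s v).symm.trans_le (hS ψ φ s)
  have S_nonneg : 0 ≤ S :=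
    nonneg_of_mul_nonneg_right ((norm_nonneg _).trans (coeff_le 0 0)) (by positivity)
  calc opNorm (Toep T p n v) ≤ √(2 * (√2 * S) ^ 2) :=
        opNorm_Toep_le_sqrt fun ψ ↦ sum_norm_sq_le_sq_of_forall_addChar (coeff_le ψ)
    _ = √((2 * S) ^ 2) := by
        congr 1
        rw [mul_pow, Real.sq_sqrt zero_le_two]
        ring
    _ = 2 * S := Real.sqrt_sq (by positivity)

variable (T p) in
/-- The set of all test vectors. -/
def testSet : Set (Fin T → Fin p → ℝ) :=
  Set.range fun a : AddChar (Fin (T + T)) ℂ × AddChar (Fin p) ℂ × Fin 4 ↦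
    testVector a.1 a.2.1 a.2.2

variable (T p) in
theorem card_testSet_le : Nat.card (testSet T p) ≤ 8 * (T * p) := by
  refine (Finite.card_range_le _).trans_eq ?_
  simp only [Nat.card_eq_fintype_card, Fintype.card_prod, AddChar.card_eq, Fintype.card_fin]
  ring

end TestVectors

theorem eight_mul_le_sixteen_pi_mul_rpow {x : ℝ} (hx : 1 ≤ x) :
    8 * x ≤ 16 * Real.pi * x ^ ((3 : ℝ) / 2) := by
  have x_le : x ≤ x ^ ((3 : ℝ) / 2) := Real.self_le_rpow_of_one_le hx (by norm_num)
  nlinarith [Real.pi_gt_three]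

theorem stmt6 (T p : ℕ) (hT : 1 ≤ T) (hp : 1 ≤ p) :
    ∃ Z : Set (Fin T → Fin p → ℝ), Z.Finite ∧ Z.Nonempty ∧
      (Nat.card Z : ℝ) ≤ 16 * Real.pi * ((T : ℝ) * p) ^ ((3 : ℝ) / 2) ∧
      (∀ z ∈ Z, ∀ i k, |z i k| ≤ 1) ∧
      ∀ (v : Fin T → Fin p → ℝ) (n : ℕ), 1 ≤ n →
        opNorm (Toep T p n v) ≤
          4 * sSup ((fun z : Fin T → Fin p → ℝ => ∑ i, ∑ k, z i k * v i k) '' Z) := by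
  have : NeZero T := ⟨by omega⟩
  have : NeZero p := ⟨by omega⟩
  have finite_testSet : (testSet T p).Finite := Set.finite_range _
  refine ⟨testSet T p, finite_testSet, Set.range_nonempty _, ?_, ?_, fun v n _ ↦ ?_⟩
  · have one_le : (1 : ℝ) ≤ T * p := by exact_mod_cast Nat.mul_pos hT hp
    calc (Nat.card (testSet T p) : ℝ) ≤ 8 * (T * p) := by exact_mod_cast card_testSet_le T p
      _ ≤ _ := eight_mul_le_sixteen_pi_mul_rpow one_le
  · rintro _ ⟨⟨ψ, φ, s⟩, rfl⟩
    exact abs_testVector_le_one ψ φ s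
  · set S := sSup ((fun z : Fin T → Fin p → ℝ ↦ ∑ i, ∑ k, z i k * v i k) '' testSet T p)
    have testVector_le_sSup ψ φ s : ∑ i, ∑ k, testVector ψ φ s i k * v i k ≤ S :=
      le_csSup (finite_testSet.image _).bddAbove ⟨_, ⟨(ψ, φ, s), rfl⟩, rfl⟩
    have opNorm_nonneg : 0 ≤ opNorm (Toep T p n v) := norm_nonneg _
    linarith [opNorm_Toep_le_two_mul_of_forall_testVector testVector_le_sSup n]
end

section
/- Let Ñ, L̄, m, q ≥ 1, let K ∈ ℝ^{Ñ×L̄}, Ū ∈ ℝ^{Ñ×q}, G⋆ ∈ ℝ^{m×q}, Δ ∈ ℝ^{Ñ×m}, and μ > 0. Set Y := Ū·G⋆ᵀ + Δ, and for A ∈ ℝ^{Ñ×m} define ridge(A, μ) ∈ ℝ^{m×L̄} by ridge(A, μ)ᵀ := (KᵀK + μ²I_{L̄})^{−1}·Kᵀ·A; let φ_rdg := ridge(Y, μ) and let Opt_μ := min over φ ∈ ℝ^{m×L̄} of ( ‖Δ − Kφᵀ‖_op + μ·‖φ‖_op ). Then: (a) ‖Δ − K·φ_rdgᵀ‖_op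 ≤ Opt_μ + ‖K·ridge(Ū G⋆ᵀ, μ)ᵀ‖_op; and (b) μ·‖φ_rdg‖_op ≤ Opt_μ + μ·‖ridge(Ū G⋆ᵀ, μ)‖_op. -/
open Matrix

/-- The ridge estimator `ridge(A, μ)ᵀ = (KᵀK + μ²I)⁻¹ Kᵀ A`. -/
noncomputable def ridge {Nt L m : ℕ} (K : Matrix (Fin Nt) (Fin L) ℝ) (μ : ℝ)
    (A : Matrix (Fin Nt) (Fin m) ℝ) : Matrix (Fin m) (Fin L) ℝ :=
  ((Kᵀ * K + μ ^ 2 • (1 : Matrix (Fin L) (Fin L) ℝ))⁻¹ * Kᵀ * A)ᵀ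

/-!
Write `R = ridge K μ Δ`. The columns of `Rᵀ` solve the normal equations of Tikhonov-regularised
least squares problems, so for every vector `v` and every competitor `φ`,
`‖(Δ - K Rᵀ) v‖² + μ²‖Rᵀ v‖² ≤ ‖(Δ - K φᵀ) v‖² + μ²‖φᵀ v‖² ≤ (‖Δ - K φᵀ‖ + μ‖φ‖)² ‖v‖²`.
Dropping either term on the left bounds the residual and the size of the ridge filter of `Δ` by
`Opt_μ`; linearity of the ridge filter and the triangle inequality account for the signal.
-/

section Tikhonov

open RCLike
open scoped InnerProductSpace

variable {𝕜 V E F : Type*} [RCLike 𝕜] [SeminormedAddCommGroup V] [NormedSpace 𝕜 V]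
  [SeminormedAddCommGroup E] [InnerProductSpace 𝕜 E]
  [SeminormedAddCommGroup F] [InnerProductSpace 𝕜 F]

theorem norm_sub_map_sq_add_norm_sq_of_inner_eq (K : E →ₗ[𝕜] F) {c : ℝ} {d : F} {x : E}
    (hx : ∀ z, ⟪d - K x, K z⟫_𝕜 = (c : 𝕜) * ⟪x, z⟫_𝕜) (y : E) :
    ‖d - K y‖ ^ 2 + c * ‖y‖ ^ 2 =
      ‖d - K x‖ ^ 2 + c * ‖x‖ ^ 2 + (‖K (y - x)‖ ^ 2 + c * ‖y - x‖ ^ 2) := by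
  have residual_expansion : ‖d - K y‖ ^ 2 =
      ‖d - K x‖ ^ 2 - 2 * (c * re ⟪x, y - x⟫_𝕜) + ‖K (y - x)‖ ^ 2 := by
    rw [← re_ofReal_mul, ← hx, ← norm_sub_sq, map_sub, sub_sub_sub_cancel_right]
  have norm_expansion : ‖y‖ ^ 2 = ‖x‖ ^ 2 + 2 * re ⟪x, y - x⟫_𝕜 + ‖y - x‖ ^ 2 := by
    rw [← norm_add_sq, add_sub_cancel]
  rw [residual_expansion, norm_expansion]
  ring

theorem norm_sub_map_sq_add_norm_sq_le_of_inner_eq (K : E →ₗ[𝕜] F) {c : ℝ} (hc : 0 ≤ c) {d : F}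
    {x : E} (hx : ∀ z, ⟪d - K x, K z⟫_𝕜 = (c : 𝕜) * ⟪x, z⟫_𝕜) (y : E) :
    ‖d - K x‖ ^ 2 + c * ‖x‖ ^ 2 ≤ ‖d - K y‖ ^ 2 + c * ‖y‖ ^ 2 := by
  rw [norm_sub_map_sq_add_norm_sq_of_inner_eq K hx y]
  exact le_add_of_nonneg_right (by positivity)

variable (K : E →L[𝕜] F) {μ : ℝ} {D : V →L[𝕜] F} {X : V →L[𝕜] E}

theorem norm_sub_comp_apply_sq_add_le_of_inner_eq (hμ : 0 ≤ μ)
    (hX : ∀ v z, ⟪D v - K (X v), K z⟫_𝕜 = ((μ ^ 2 : ℝ) : 𝕜) * ⟪X v, z⟫_𝕜) (Φ : V →L[𝕜] E) (v : V) :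
    ‖(D - K ∘L X) v‖ ^ 2 + (μ * ‖X v‖) ^ 2 ≤ ((‖D - K ∘L Φ‖ + μ * ‖Φ‖) * ‖v‖) ^ 2 :=
  calc ‖(D - K ∘L X) v‖ ^ 2 + (μ * ‖X v‖) ^ 2
    _ ≤ ‖(D - K ∘L Φ) v‖ ^ 2 + (μ * ‖Φ v‖) ^ 2 := by
      rw [mul_pow, mul_pow]
      exact norm_sub_map_sq_add_norm_sq_le_of_inner_eq K.toLinearMap (sq_nonneg μ) (hX v) (Φ v)
    _ ≤ (‖(D - K ∘L Φ) v‖ + μ * ‖Φ v‖) ^ 2 :=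
      pow_add_pow_le (norm_nonneg _) (by positivity) two_ne_zero
    _ ≤ (‖D - K ∘L Φ‖ * ‖v‖ + μ * (‖Φ‖ * ‖v‖)) ^ 2 := by
      gcongr <;> exact ContinuousLinearMap.le_opNorm _ v
    _ = ((‖D - K ∘L Φ‖ + μ * ‖Φ‖) * ‖v‖) ^ 2 := by ring

theorem norm_sub_comp_le_of_inner_eq (hμ : 0 ≤ μ)
    (hX : ∀ v z, ⟪D v - K (X v), K z⟫_𝕜 = ((μ ^ 2 : ℝ) : 𝕜) * ⟪X v, z⟫_𝕜) (Φ : V →L[𝕜] E) :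
    ‖D - K ∘L X‖ ≤ ‖D - K ∘L Φ‖ + μ * ‖Φ‖ := by
  refine ContinuousLinearMap.opNorm_le_bound _ (by positivity) fun v => ?_
  refine le_of_sq_le_sq ?_ (by positivity)
  exact (le_add_of_nonneg_right (sq_nonneg _)).trans
    (norm_sub_comp_apply_sq_add_le_of_inner_eq K hμ hX Φ v)

theorem mul_norm_le_of_inner_eq (hμ : 0 ≤ μ)
    (hX : ∀ v z, ⟪D v - K (X v), K z⟫_𝕜 = ((μ ^ 2 : ℝ) : 𝕜) * ⟪X v, z⟫_𝕜) (Φ : V →L[𝕜] E) :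
    μ * ‖X‖ ≤ ‖D - K ∘L Φ‖ + μ * ‖Φ‖ := by
  have norm_smul_eq : ‖(μ : 𝕜) • X‖ = μ * ‖X‖ := by rw [norm_smul, norm_of_nonneg hμ]
  rw [← norm_smul_eq]
  refine ContinuousLinearMap.opNorm_le_bound _ (by positivity) fun v => ?_
  rw [_root_.smul_apply, norm_smul, norm_of_nonneg hμ]
  refine le_of_sq_le_sq ?_ (by positivity)
  exact (le_add_of_nonneg_left (sq_nonneg _)).trans
    (norm_sub_comp_apply_sq_add_le_of_inner_eq K hμ hX Φ v)

end Tikhonov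

section NormalEquation

open LinearMap (toContinuousLinearMap)
open scoped InnerProductSpace Matrix.Norms.L2Operator

variable {𝕜 n l m : Type*} [RCLike 𝕜] [Fintype n] [Fintype l] [Fintype m]
  [DecidableEq m]

theorem inner_toEuclideanLin_right [DecidableEq n] [DecidableEq l] (A : Matrix n l 𝕜)
    (x : EuclideanSpace 𝕜 n) (y : EuclideanSpace 𝕜 l) :
    ⟪x, A.toEuclideanLin y⟫_𝕜 = ⟪Aᴴ.toEuclideanLin x, y⟫_𝕜 := by
  rw [toEuclideanLin_conjTranspose_eq_adjoint, LinearMap.adjoint_inner_left]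

theorem l2_opNorm_sub_mul_eq_norm_sub_comp [DecidableEq l] (D : Matrix n m 𝕜)
    (K : Matrix n l 𝕜) (X : Matrix l m 𝕜) :
    ‖D - K * X‖ = ‖toContinuousLinearMap D.toEuclideanLin -
      toContinuousLinearMap K.toEuclideanLin ∘L toContinuousLinearMap X.toEuclideanLin‖ := by
  rw [l2_opNorm_def, LinearEquiv.trans_apply, map_sub, map_sub, toLpLin_mul_same]
  rfl

variable {K : Matrix n l 𝕜} {D : Matrix n m 𝕜} {X : Matrix l m 𝕜}

theorem inner_toEuclideanLin_of_normal_equation [DecidableEq l] {c : ℝ}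
    (hX : Kᴴ * (D - K * X) = c • X) (v : EuclideanSpace 𝕜 m) (z : EuclideanSpace 𝕜 l) :
    ⟪D.toEuclideanLin v - K.toEuclideanLin (X.toEuclideanLin v), K.toEuclideanLin z⟫_𝕜 =
      (c : 𝕜) * ⟪X.toEuclideanLin v, z⟫_𝕜 := by
  classical
  have normal_equation_apply :
      Kᴴ.toEuclideanLin (D.toEuclideanLin v - K.toEuclideanLin (X.toEuclideanLin v)) =
        (c : 𝕜) • X.toEuclideanLin v := by
    rw [← LinearMap.smul_apply, ← map_smul, ← RCLike.real_smul_eq_coe_smul, ← hX,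
      toLpLin_mul_same, LinearMap.comp_apply, map_sub toEuclideanLin, toLpLin_mul_same]
    rfl
  rw [inner_toEuclideanLin_right, normal_equation_apply, inner_smul_left, RCLike.conj_ofReal]

theorem l2_opNorm_sub_mul_le_of_normal_equation {μ : ℝ} (hμ : 0 ≤ μ)
    (hX : Kᴴ * (D - K * X) = μ ^ 2 • X) (Φ : Matrix l m 𝕜) :
    ‖D - K * X‖ ≤ ‖D - K * Φ‖ + μ * ‖Φ‖ := by
  classical
  rw [l2_opNorm_sub_mul_eq_norm_sub_comp, l2_opNorm_sub_mul_eq_norm_sub_comp]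
  exact norm_sub_comp_le_of_inner_eq (toContinuousLinearMap K.toEuclideanLin) hμ
    (D := toContinuousLinearMap D.toEuclideanLin) (X := toContinuousLinearMap X.toEuclideanLin)
    (inner_toEuclideanLin_of_normal_equation hX) (toContinuousLinearMap Φ.toEuclideanLin)

theorem mul_l2_opNorm_le_of_normal_equation {μ : ℝ} (hμ : 0 ≤ μ)
    (hX : Kᴴ * (D - K * X) = μ ^ 2 • X) (Φ : Matrix l m 𝕜) :
    μ * ‖X‖ ≤ ‖D - K * Φ‖ + μ * ‖Φ‖ := by
  classical
  rw [l2_opNorm_sub_mul_eq_norm_sub_comp]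
  exact mul_norm_le_of_inner_eq (toContinuousLinearMap K.toEuclideanLin) hμ
    (D := toContinuousLinearMap D.toEuclideanLin) (X := toContinuousLinearMap X.toEuclideanLin)
    (inner_toEuclideanLin_of_normal_equation hX) (toContinuousLinearMap Φ.toEuclideanLin)

open scoped ComplexOrder in
theorem isUnit_det_conjTranspose_mul_self_add_smul_one [DecidableEq l] (K : Matrix n l 𝕜)
    {c : ℝ} (hc : 0 < c) :
    IsUnit (Kᴴ * K + c • (1 : Matrix l l 𝕜)).det := by
  have posDef : (Kᴴ * K + c • (1 : Matrix l l 𝕜)).PosDef :=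
    PosDef.posSemidef_add (posSemidef_conjTranspose_mul_self K) (PosDef.one.smul hc)
  exact (isUnit_iff_isUnit_det _).1 posDef.isUnit

end NormalEquation

section OpNorm

open scoped Matrix.Norms.L2Operator

variable {α β : Type*} [Fintype α] [Fintype β] [DecidableEq β]

theorem opNorm_eq_l2_opNorm (A : Matrix α β ℝ) : opNorm A = ‖A‖ := rfl

theorem opNorm_transpose [DecidableEq α] (A : Matrix α β ℝ) : opNorm Aᵀ = opNorm A := by
  rw [opNorm_eq_l2_opNorm, opNorm_eq_l2_opNorm, ← conjTranspose_eq_transpose_of_trivial,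
    l2_opNorm_conjTranspose]

theorem opNorm_add_le (A B : Matrix α β ℝ) : opNorm (A + B) ≤ opNorm A + opNorm B :=
  norm_add_le A B

theorem opNorm_sub_le (A B : Matrix α β ℝ) : opNorm (A - B) ≤ opNorm A + opNorm B :=
  norm_sub_le A B

end OpNorm

section Ridge

variable {Nt L m : ℕ} (K : Matrix (Fin Nt) (Fin L) ℝ)

theorem ridge_add (μ : ℝ) (A B : Matrix (Fin Nt) (Fin m) ℝ) :
    ridge K μ (A + B) = ridge K μ A + ridge K μ B := by
  simp only [ridge, Matrix.mul_add, transpose_add]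

theorem ridge_normal_equation {μ : ℝ} (hμ : μ ≠ 0) (A : Matrix (Fin Nt) (Fin m) ℝ) :
    Kᴴ * (A - K * (ridge K μ A)ᵀ) = μ ^ 2 • (ridge K μ A)ᵀ := by
  have regularized_system : (Kᴴ * K + μ ^ 2 • 1) * (ridge K μ A)ᵀ = Kᴴ * A := by
    rw [ridge, transpose_transpose, Matrix.mul_assoc, ← conjTranspose_eq_transpose_of_trivial]
    exact mul_nonsing_inv_cancel_left _ _
      (isUnit_det_conjTranspose_mul_self_add_smul_one K (by positivity))
  rw [Matrix.mul_sub, ← regularized_system, Matrix.add_mul, Matrix.smul_mul, Matrix.one_mul,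
    Matrix.mul_assoc, add_sub_cancel_left]

theorem opNorm_sub_mul_ridge_transpose_le_iInf {μ : ℝ} (hμ : 0 < μ)
    (A : Matrix (Fin Nt) (Fin m) ℝ) :
    opNorm (A - K * (ridge K μ A)ᵀ) ≤
      ⨅ φ : Matrix (Fin m) (Fin L) ℝ, (opNorm (A - K * φᵀ) + μ * opNorm φ) := by
  refine le_ciInf fun φ => ?_
  rw [← opNorm_transpose φ]
  exact l2_opNorm_sub_mul_le_of_normal_equation hμ.le (ridge_normal_equation K hμ.ne' A) φᵀ

theorem mul_opNorm_ridge_le_iInf {μ : ℝ} (hμ : 0 < μ)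
    (A : Matrix (Fin Nt) (Fin m) ℝ) :
    μ * opNorm (ridge K μ A) ≤
      ⨅ φ : Matrix (Fin m) (Fin L) ℝ, (opNorm (A - K * φᵀ) + μ * opNorm φ) := by
  refine le_ciInf fun φ => ?_
  rw [← opNorm_transpose φ, ← opNorm_transpose (ridge K μ A)]
  exact mul_l2_opNorm_le_of_normal_equation hμ.le (ridge_normal_equation K hμ.ne' A) φᵀ

end Ridge

theorem stmt10 {Nt L m q : ℕ} (hNt : 1 ≤ Nt) (hL : 1 ≤ L) (hm : 1 ≤ m) (hq : 1 ≤ q)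
    (K : Matrix (Fin Nt) (Fin L) ℝ) (Ubar : Matrix (Fin Nt) (Fin q) ℝ)
    (G : Matrix (Fin m) (Fin q) ℝ) (Δ : Matrix (Fin Nt) (Fin m) ℝ)
    (μ : ℝ) (hμ : 0 < μ) (Y : Matrix (Fin Nt) (Fin m) ℝ) (hY : Y = Ubar * Gᵀ + Δ) :
    opNorm (Δ - K * (ridge K μ Y)ᵀ) ≤
        (⨅ φ : Matrix (Fin m) (Fin L) ℝ, (opNorm (Δ - K * φᵀ) + μ * opNorm φ)) +
          opNorm (K * (ridge K μ (Ubar * Gᵀ))ᵀ) ∧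
    μ * opNorm (ridge K μ Y) ≤
        (⨅ φ : Matrix (Fin m) (Fin L) ℝ, (opNorm (Δ - K * φᵀ) + μ * opNorm φ)) +
          μ * opNorm (ridge K μ (Ubar * Gᵀ)) := by
  rw [hY, ridge_add]
  constructor
  · have residual_eq : Δ - K * (ridge K μ (Ubar * Gᵀ) + ridge K μ Δ)ᵀ =
        (Δ - K * (ridge K μ Δ)ᵀ) - K * (ridge K μ (Ubar * Gᵀ))ᵀ := by
      rw [transpose_add, Matrix.mul_add, sub_add_eq_sub_sub_swap]
    rw [residual_eq]
    exact (opNorm_sub_le _ _).trans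
      (by gcongr; exact opNorm_sub_mul_ridge_transpose_le_iInf K hμ Δ)
  · calc μ * opNorm (ridge K μ (Ubar * Gᵀ) + ridge K μ Δ)
      _ ≤ μ * (opNorm (ridge K μ (Ubar * Gᵀ)) + opNorm (ridge K μ Δ)) := by
        gcongr
        exact opNorm_add_le _ _
      _ = μ * opNorm (ridge K μ Δ) + μ * opNorm (ridge K μ (Ubar * Gᵀ)) := by ring
      _ ≤ _ := by
        gcongr
        exact mul_opNorm_ridge_le_iInf K hμ Δ
end
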